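/- arXiv:1311.4066 — 2 statements merged into one kernel-verified Lean document; each statement's English description precedes it below -/
import Mathlib

section
/- Let A = [[1,1],[1,−1]] (a 2×2 complex matrix). For every n ≥ 1, (A⊗…⊗A) applied to the n-arity EQUAL gate |0…0⟩ + |1…1⟩ equals 2·Σ_{b ∈ {0,1}^n with an even number of ones} |b⟩. Moreover, for the n×n skew-symmetric matrix Ξ with Ξ_{ij} = 1 for all i < j, Pf(Ξ|_I) = 1 for every I ⊆ {1,…,n} of even cardinality; consequently the n-arity EQUAL gate is Pfaffian under the homogeneous change of basis A, with (A⊗…⊗A)(|0…0⟩+|1…1⟩) = 2·sPf(Ξ). -/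
/-!
At `b` the transformed EQUAL gate is `∏ᵢ A(bᵢ,0) + ∏ᵢ A(bᵢ,1) = 1 + (-1)^|supp b|`, which is `2` or
`0` according to the parity of `|supp b|`.

Let `Ξ` be the skew-symmetric matrix with ones above the diagonal. Expanding `Pf(Ξ|_I)` along the
row of `min I`, every entry of `Ξ` that occurs is `1`, and inductively all the minors have the same
value, given by the parity of `|I|`. So it remains to see that the signs `(-1)^(rank of i in I)`,
`i ∈ I \ {min I}`, form the alternating sum `1 - 1 + 1 - ⋯` with `|I| - 1` terms, which is `1` for
even `|I|`.
-/

open scoped BigOperators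

noncomputable section

/-- Change of basis on an `n`-arity gate: `((A₁⊗…⊗Aₙ)G)(b) = Σ_c (∏ᵢ Aᵢ(bᵢ,cᵢ))·G(c)`. -/
def cobGate {n : ℕ} (A : Fin n → Matrix (Fin 2) (Fin 2) ℂ) (G : (Fin n → Fin 2) → ℂ) :
    (Fin n → Fin 2) → ℂ :=
  fun b => ∑ c : Fin n → Fin 2, (∏ i, A i (b i) (c i)) * G c

/-- Change of basis on an `n`-arity cogate: `C′(b) = Σ_c C(c)·∏ᵢ Aᵢ⁻¹(cᵢ,bᵢ)`. -/
def cobCogate {n : ℕ} (A : Fin n → Matrix (Fin 2) (Fin 2) ℂ) (C : (Fin n → Fin 2) → ℂ) :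
    (Fin n → Fin 2) → ℂ :=
  fun b => ∑ c : Fin n → Fin 2, C c * ∏ i, (A i)⁻¹ (c i) (b i)

/-- The standard basis vector (ket/bra) at the bitstring `v`. -/
def ket {n : ℕ} (v : Fin n → Fin 2) : (Fin n → Fin 2) → ℂ :=
  fun b => if b = v then 1 else 0

/-- The support of a bitstring. -/
def supp {n : ℕ} (b : Fin n → Fin 2) : Finset (Fin n) :=
  Finset.univ.filter fun i => b i = 1

/-- Fuel-driven Laplace expansion of the Pfaffian of a principal submatrix. -/
def subPfAux {n : ℕ} (Ξ : Matrix (Fin n) (Fin n) ℂ) : ℕ → Finset (Fin n) → ℂ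
  | 0, I => if I = ∅ then 1 else 0
  | fuel + 1, I =>
    if hI : I.Nonempty then
      if Odd I.card then 0
      else
        ∑ i ∈ I.erase (I.min' hI),
          (-1 : ℂ) ^ (I.filter fun j => j ≤ i).card * Ξ (I.min' hI) i *
            subPfAux Ξ fuel ((I.erase (I.min' hI)).erase i)
    else 1

/-- `subPf Ξ I` is the Pfaffian `Pf(Ξ|_I)` of the principal submatrix of `Ξ` on the
rows and columns in `I` (`1` on the empty set, `0` for odd `|I|`). -/
def subPf {n : ℕ} (Ξ : Matrix (Fin n) (Fin n) ℂ) (I : Finset (Fin n)) : ℂ :=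
  subPfAux Ξ I.card I

/-- The sub-Pfaffian vector: coordinate `Pf(Ξ|_I)` at the bitstring with support `I`. -/
def sPf {n : ℕ} (Ξ : Matrix (Fin n) (Fin n) ℂ) : (Fin n → Fin 2) → ℂ :=
  fun b => subPf Ξ (supp b)

/-- The dual sub-Pfaffian vector: coordinate `Pf(Θ|_{Jᶜ})` at the bitstring with support `J`. -/
def sPfStar {n : ℕ} (Θ : Matrix (Fin n) (Fin n) ℂ) : (Fin n → Fin 2) → ℂ :=
  fun b => subPf Θ (supp b)ᶜ

/-- A matrix is skew-symmetric. -/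
def IsSkew {n : ℕ} (Ξ : Matrix (Fin n) (Fin n) ℂ) : Prop :=
  ∀ i j, Ξ j i = -Ξ i j

/-- A gate is Pfaffian under the change of basis `M`. -/
def IsPfaffGate {n : ℕ} (M : Fin n → Matrix (Fin 2) (Fin 2) ℂ) (G : (Fin n → Fin 2) → ℂ) : Prop :=
  ∃ (α : ℂ) (Ξ : Matrix (Fin n) (Fin n) ℂ), IsSkew Ξ ∧ cobGate M G = fun b => α * sPf Ξ b

/-- A cogate is Pfaffian under the change of basis `M`. -/
def IsPfaffCogate {n : ℕ} (M : Fin n → Matrix (Fin 2) (Fin 2) ℂ) (C : (Fin n → Fin 2) → ℂ) : Prop :=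
  ∃ (β : ℂ) (Θ : Matrix (Fin n) (Fin n) ℂ), IsSkew Θ ∧ cobCogate M C = fun b => β * sPfStar Θ b

def matA : Matrix (Fin 2) (Fin 2) ℂ := !![1, 1; 1, -1]

/-- The all-ones-above-the-diagonal skew-symmetric matrix. -/
def onesSkew (n : ℕ) : Matrix (Fin n) (Fin n) ℂ :=
  Matrix.of fun i j => if i < j then 1 else if j < i then -1 else 0

section FinsetRank

variable {α : Type*}

theorem card_erase_erase_add_two [DecidableEq α] {S : Finset α} {a b : α} (ha : a ∈ S)
    (hb : b ∈ S.erase a) : ((S.erase a).erase b).card + 2 = S.card := by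
  rw [← Finset.card_erase_add_one ha, ← Finset.card_erase_add_one hb]

variable [LinearOrder α]

theorem sum_comp_card_filter_le {M : Type*} [AddCommMonoid M] (S : Finset α) (f : ℕ → M) :
    ∑ i ∈ S, f (S.filter (· ≤ i)).card = ∑ k ∈ Finset.range S.card, f (k + 1) := by
  induction S using Finset.induction_on_max with
  | empty => simp
  | insert a s ha ih =>
    have hnotMem : a ∉ s := fun h => lt_irrefl a (ha a h)
    have hrank_max : (insert a s).filter (· ≤ a) = insert a s :=
      Finset.filter_true_of_mem <|
        (Finset.forall_mem_insert _ _ _).2 ⟨le_rfl, fun j hj => (ha j hj).le⟩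
    have hrank : ∀ i ∈ s, (insert a s).filter (· ≤ i) = s.filter (· ≤ i) := fun i hi => by
      rw [Finset.filter_insert, if_neg (ha i hi).not_ge]
    rw [Finset.sum_insert hnotMem, hrank_max, Finset.card_insert_of_notMem hnotMem,
      Finset.sum_range_succ, ← ih, add_comm]
    congr 1
    exact Finset.sum_congr rfl fun i hi => by rw [hrank i hi]

theorem filter_le_min'_eq_singleton (S : Finset α) (hS : S.Nonempty) :
    S.filter (· ≤ S.min' hS) = {S.min' hS} := by
  ext j
  simp only [Finset.mem_filter, Finset.mem_singleton]
  constructor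
  · rintro ⟨hj, hle⟩
    exact le_antisymm hle (S.min'_le j hj)
  · rintro rfl
    exact ⟨S.min'_mem hS, le_rfl⟩

variable {R : Type*} [Ring R]

theorem sum_neg_one_pow_card_filter_le (S : Finset α) :
    ∑ i ∈ S, (-1 : R) ^ (S.filter (· ≤ i)).card = if Even S.card then 0 else -1 := by
  rw [sum_comp_card_filter_le S fun k => (-1 : R) ^ k]
  simp only [pow_succ, ← Finset.sum_mul, neg_one_geom_sum, ite_mul, zero_mul, one_mul]

theorem sum_erase_min'_neg_one_pow_card_filter_le (S : Finset α) (hS : S.Nonempty) :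
    ∑ i ∈ S.erase (S.min' hS), (-1 : R) ^ (S.filter (· ≤ i)).card =
      if Even S.card then 1 else 0 := by
  rw [Finset.sum_erase_eq_sub (S.min'_mem hS), sum_neg_one_pow_card_filter_le,
    filter_le_min'_eq_singleton, Finset.card_singleton, pow_one]
  split_ifs <;> simp

end FinsetRank

theorem one_add_neg_one_pow {R : Type*} [Ring R] (k : ℕ) :
    1 + (-1 : R) ^ k = if Even k then 2 else 0 := by
  rw [neg_one_pow_eq_ite]
  split_ifs <;> norm_num

section ChangeOfBasis

variable {n : ℕ}

theorem cobGate_add (A : Fin n → Matrix (Fin 2) (Fin 2) ℂ) (G H : (Fin n → Fin 2) → ℂ) :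
    cobGate A (G + H) = cobGate A G + cobGate A H := by
  ext b
  simp only [cobGate, Pi.add_apply, mul_add, Finset.sum_add_distrib]

theorem cobGate_ket (A : Fin n → Matrix (Fin 2) (Fin 2) ℂ) (v b : Fin n → Fin 2) :
    cobGate A (ket v) b = ∏ i, A i (b i) (v i) := by
  simp only [cobGate, ket, mul_ite, mul_one, mul_zero, Finset.sum_ite_eq', Finset.mem_univ, if_true]

theorem matA_apply_zero (x : Fin 2) : matA x 0 = 1 := by
  fin_cases x <;> rfl

theorem matA_apply_one (x : Fin 2) : matA x 1 = if x = 1 then -1 else 1 := by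
  fin_cases x <;> simp [matA]

theorem prod_matA_apply_one (b : Fin n → Fin 2) :
    ∏ i, matA (b i) 1 = (-1) ^ (supp b).card := by
  simp only [matA_apply_one, supp, Finset.prod_ite, Finset.prod_const, one_pow, mul_one]

theorem cobGate_matA_equal (b : Fin n → Fin 2) :
    cobGate (fun _ => matA) (ket (fun _ => 0) + ket (fun _ => 1)) b =
      if Even (supp b).card then 2 else 0 := by
  rw [cobGate_add, Pi.add_apply, cobGate_ket, cobGate_ket, prod_matA_apply_one,
    Finset.prod_congr rfl fun i _ => matA_apply_zero (b i), Finset.prod_const_one,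
    one_add_neg_one_pow]

end ChangeOfBasis

section SubPfaffian

variable {n : ℕ} (Ξ : Matrix (Fin n) (Fin n) ℂ)

theorem subPfAux_empty (fuel : ℕ) : subPfAux Ξ fuel ∅ = 1 := by
  cases fuel <;> simp [subPfAux]

theorem subPfAux_eq_of_card_le {f g : ℕ} {I : Finset (Fin n)} (hf : I.card ≤ f)
    (hg : I.card ≤ g) : subPfAux Ξ f I = subPfAux Ξ g I := by
  induction f generalizing g I with
  | zero =>
    obtain rfl : I = ∅ := Finset.card_eq_zero.1 (Nat.le_zero.1 hf)
    rw [subPfAux_empty, subPfAux_empty]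
  | succ f ih =>
    rcases I.eq_empty_or_nonempty with rfl | hI
    · rw [subPfAux_empty, subPfAux_empty]
    obtain ⟨g, rfl⟩ := Nat.exists_eq_add_one.2 (hI.card_pos.trans_le hg)
    simp only [subPfAux, dif_pos hI]
    congr 1
    refine Finset.sum_congr rfl fun i hi => ?_
    have hcard := card_erase_erase_add_two (I.min'_mem hI) hi
    rw [ih (by omega) (by omega : _ ≤ g)]

theorem subPf_empty : subPf Ξ ∅ = 1 :=
  subPfAux_empty Ξ _

theorem subPf_eq_ite {I : Finset (Fin n)} (hI : I.Nonempty) :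
    subPf Ξ I = if Odd I.card then 0 else
      ∑ i ∈ I.erase (I.min' hI), (-1) ^ (I.filter (· ≤ i)).card * Ξ (I.min' hI) i *
        subPf Ξ ((I.erase (I.min' hI)).erase i) := by
  obtain ⟨k, hk⟩ := Nat.exists_eq_add_one.2 hI.card_pos
  rw [subPf, hk, subPfAux, dif_pos hI, hk]
  congr 1
  refine Finset.sum_congr rfl fun i hi => ?_
  have hcard := card_erase_erase_add_two (I.min'_mem hI) hi
  rw [subPf, subPfAux_eq_of_card_le Ξ (by omega) le_rfl]

theorem subPf_of_odd {I : Finset (Fin n)} (hI : Odd I.card) : subPf Ξ I = 0 := by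
  rw [subPf_eq_ite Ξ (Finset.card_pos.1 hI.pos), if_pos hI]

theorem subPf_eq_sum_erase_min' {I : Finset (Fin n)} (hI : I.Nonempty) :
    subPf Ξ I = ∑ i ∈ I.erase (I.min' hI), (-1) ^ (I.filter (· ≤ i)).card * Ξ (I.min' hI) i *
      subPf Ξ ((I.erase (I.min' hI)).erase i) := by
  rw [subPf_eq_ite Ξ hI]
  split_ifs with hodd
  · refine (Finset.sum_eq_zero fun i hi => ?_).symm
    have hminor : Odd ((I.erase (I.min' hI)).erase i).card := by
      rwa [← card_erase_erase_add_two (I.min'_mem hI) hi, Nat.odd_add,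
        iff_true_right even_two] at hodd
    rw [subPf_of_odd Ξ hminor, mul_zero]
  · rfl

theorem onesSkew_apply_of_lt {i j : Fin n} (h : i < j) : onesSkew n i j = 1 :=
  if_pos h

theorem subPf_onesSkew (I : Finset (Fin n)) :
    subPf (onesSkew n) I = if Even I.card then 1 else 0 := by
  induction I using Finset.strongInduction with
  | H I ih =>
    rcases I.eq_empty_or_nonempty with rfl | hI
    · simp [subPf_empty]
    have hentry : ∀ i ∈ I.erase (I.min' hI), onesSkew n (I.min' hI) i = 1 := fun i hi =>
      onesSkew_apply_of_lt (I.min'_lt_of_mem_erase_min' hI hi)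
    have hminor : ∀ i ∈ I.erase (I.min' hI),
        subPf (onesSkew n) ((I.erase (I.min' hI)).erase i) = if Even I.card then 1 else 0 := by
      intro i hi
      rw [ih _ ((Finset.erase_ssubset hi).trans (Finset.erase_ssubset (I.min'_mem hI))),
        ← card_erase_erase_add_two (I.min'_mem hI) hi]
      simp only [Nat.even_add, even_two, iff_true]
    calc subPf (onesSkew n) I
        = ∑ i ∈ I.erase (I.min' hI),
            (-1) ^ (I.filter (· ≤ i)).card * (if Even I.card then 1 else 0) := by
          rw [subPf_eq_sum_erase_min' _ hI]
          exact Finset.sum_congr rfl fun i hi => by rw [hentry i hi, hminor i hi, mul_one]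
      _ = (if Even I.card then 1 else 0) * (if Even I.card then 1 else 0) := by
          rw [← Finset.sum_mul, sum_erase_min'_neg_one_pow_card_filter_le]
      _ = if Even I.card then 1 else 0 := by
          rw [mul_ite, mul_one, mul_zero]
          split_ifs <;> rfl

end SubPfaffian

/-- gate half of Proposition 3.1. -/
theorem stmt1 (n : ℕ) (hn : 1 ≤ n) :
    (cobGate (fun _ : Fin n => matA) (ket (fun _ => 0) + ket (fun _ => 1)) =
      fun b => if Even (supp b).card then (2 : ℂ) else 0) ∧
    (∀ I : Finset (Fin n), Even I.card → subPf (onesSkew n) I = 1) ∧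
    (cobGate (fun _ : Fin n => matA) (ket (fun _ => 0) + ket (fun _ => 1)) =
      fun b => 2 * sPf (onesSkew n) b) := by
  refine ⟨funext cobGate_matA_equal, fun I hI => ?_, funext fun b => ?_⟩
  · rw [subPf_onesSkew, if_pos hI]
  · rw [cobGate_matA_equal, sPf, subPf_onesSkew, mul_ite, mul_one, mul_zero]
end
end

section
/- Let A = [[1,1],[1,−1]]. Let S be any nonempty collection of bitstrings in {0,1}³ that is closed under complementation (b ∈ S implies the bitwise complement b̄ ∈ S), and let G = Σ_{b ∈ S} |b⟩. Then G is Pfaffian under the homogeneous change of basis (A, A, A): there exist α ∈ ℂ and ξ₁₂, ξ₁₃, ξ₂₃ ∈ ℂ such that (A⊗A⊗A)G = α·(|000⟩ + ξ₁₂|110⟩ + ξ₁₃|101⟩ + ξ₂₃|011⟩). (Taking all 15 nonempty complement-closed collections S recovers exactly the 15 3-arity gates listed in the paper's Theorem 4.6, e.g. |000⟩+|111⟩, |100⟩+|011⟩, |000⟩+|100⟩+|011⟩+|111⟩, …, and the sum of all eight basis kets.) -/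
open scoped BigOperators

noncomputable section

/-- Bitwise complement of a bitstring. -/
def bcompl {n : ℕ} (b : Fin n → Fin 2) : Fin n → Fin 2 :=
  fun i => if b i = 0 then 1 else 0

/-!
Complementing the column index multiplies the row `x` of `A = [[1, 1], [1, -1]]` by `(-1)^x`. So if
`G` is invariant under complementation, reindexing the sum that defines `T b`, for
`T = (A ⊗ ⋯ ⊗ A) G`, gives `T b = (-1)^|b| T b`, and `T` vanishes at bitstrings of odd weight. In
arity 3 this leaves the four kets of even weight, and the coefficient `T 000 = ∑ c, G c` of the
first may be factored out as soon as it is nonzero.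
-/

theorem bcompl_involutive {n : ℕ} : Function.Involutive (bcompl (n := n)) := by
  intro b
  funext i
  unfold bcompl
  generalize b i = x
  fin_cases x <;> rfl

theorem bcompl_mem_iff {n : ℕ} {S : Finset (Fin n → Fin 2)} (hcl : ∀ b ∈ S, bcompl b ∈ S)
    (b : Fin n → Fin 2) : bcompl b ∈ S ↔ b ∈ S :=
  ⟨fun h => bcompl_involutive b ▸ hcl _ h, hcl b⟩

theorem matA_zero_apply (c : Fin 2) : matA 0 c = 1 := by
  fin_cases c <;> rfl

theorem matA_bcompl_apply {n : ℕ} (x : Fin 2) (c : Fin n → Fin 2) (i : Fin n) :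
    matA x (bcompl c i) = (if x = 1 then -1 else 1) * matA x (c i) := by
  unfold bcompl
  generalize c i = y
  fin_cases x <;> fin_cases y <;> simp [matA]

theorem prod_matA_bcompl {n : ℕ} (b c : Fin n → Fin 2) :
    ∏ i, matA (b i) (bcompl c i) = (-1) ^ (supp b).card * ∏ i, matA (b i) (c i) := by
  simp only [matA_bcompl_apply, Finset.prod_mul_distrib, Finset.prod_ite, Finset.prod_const,
    one_pow, mul_one, supp]

theorem cobGate_matA_comp_bcompl {n : ℕ} (G : (Fin n → Fin 2) → ℂ) (b : Fin n → Fin 2) :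
    cobGate (fun _ => matA) (G ∘ bcompl) b =
      (-1) ^ (supp b).card * cobGate (fun _ => matA) G b := by
  calc cobGate (fun _ => matA) (G ∘ bcompl) b
      = ∑ c, (∏ i, matA (b i) (c i)) * G (bcompl c) := rfl
    _ = ∑ c, (∏ i, matA (b i) (bcompl c i)) * G c :=
        Fintype.sum_equiv bcompl_involutive.toPerm _ _ fun c => by
          simp only [Function.Involutive.coe_toPerm, bcompl_involutive c]
    _ = (-1) ^ (supp b).card * cobGate (fun _ => matA) G b := by
        simp only [prod_matA_bcompl, cobGate, Finset.mul_sum, mul_assoc]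

theorem cobGate_matA_eq_zero_of_odd {n : ℕ} {G : (Fin n → Fin 2) → ℂ}
    (hG : ∀ c, G (bcompl c) = G c) {b : Fin n → Fin 2} (hb : Odd (supp b).card) :
    cobGate (fun _ => matA) G b = 0 := by
  have hinv : G ∘ bcompl = G := funext hG
  have hneg := cobGate_matA_comp_bcompl G b
  rwa [hinv, hb.neg_one_pow, neg_one_mul, self_eq_neg] at hneg

theorem cobGate_matA_zero {n : ℕ} (G : (Fin n → Fin 2) → ℂ) :
    cobGate (fun _ => matA) G 0 = ∑ c, G c := by
  simp only [cobGate, Pi.zero_apply, matA_zero_apply, Finset.prod_const_one, one_mul]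

theorem eq_sum_even_ket {n : ℕ} {T : (Fin n → Fin 2) → ℂ}
    (hT : ∀ v, Odd (supp v).card → T v = 0) (b : Fin n → Fin 2) :
    T b = ∑ v with Even (supp v).card, T v * ket v b := by
  calc T b = ∑ v, T v * ket v b := by
        simp only [ket, mul_ite, mul_one, mul_zero, Finset.sum_ite_eq, Finset.mem_univ, if_true]
    _ = ∑ v with Even (supp v).card, T v * ket v b := by
        refine (Finset.sum_filter_of_ne fun v _ hv => ?_).symm
        contrapose! hv
        rw [hT v (Nat.not_even_iff_odd.mp hv), zero_mul]

theorem filter_even_card_supp_three :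
    (Finset.univ.filter fun v : Fin 3 → Fin 2 => Even (supp v).card) =
      {![0, 0, 0], ![1, 1, 0], ![1, 0, 1], ![0, 1, 1]} := by
  decide

theorem exists_eq_mul_ket_of_odd_eq_zero {T : (Fin 3 → Fin 2) → ℂ}
    (hT : ∀ v, Odd (supp v).card → T v = 0) (h0 : T 0 ≠ 0) :
    ∃ α ξ12 ξ13 ξ23 : ℂ,
      T = fun b => α * (ket ![0, 0, 0] b + ξ12 * ket ![1, 1, 0] b
          + ξ13 * ket ![1, 0, 1] b + ξ23 * ket ![0, 1, 1] b) := by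
  refine ⟨T 0, T ![1, 1, 0] / T 0, T ![1, 0, 1] / T 0, T ![0, 1, 1] / T 0, funext fun b => ?_⟩
  have hexpand : T b = T ![0, 0, 0] * ket ![0, 0, 0] b + (T ![1, 1, 0] * ket ![1, 1, 0] b
      + (T ![1, 0, 1] * ket ![1, 0, 1] b + T ![0, 1, 1] * ket ![0, 1, 1] b)) := by
    rw [eq_sum_even_ket hT b, filter_even_card_supp_three, Finset.sum_insert (by decide),
      Finset.sum_insert (by decide), Finset.sum_insert (by decide), Finset.sum_singleton]
  have hzero : (![0, 0, 0] : Fin 3 → Fin 2) = 0 := by decide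
  rw [hexpand, hzero]
  field_simp
  ring

theorem stmt6_general (G : (Fin 3 → Fin 2) → ℂ) (hG : ∀ b, G (bcompl b) = G b)
    (hsum : ∑ b, G b ≠ 0) :
    ∃ α ξ12 ξ13 ξ23 : ℂ,
      cobGate ![matA, matA, matA] G =
        fun b => α * (ket ![0, 0, 0] b + ξ12 * ket ![1, 1, 0] b
          + ξ13 * ket ![1, 0, 1] b + ξ23 * ket ![0, 1, 1] b) := by
  have hconst : ![matA, matA, matA] = fun _ => matA := by
    funext i
    fin_cases i <;> rfl
  rw [hconst]
  refine exists_eq_mul_ket_of_odd_eq_zero (fun _ => cobGate_matA_eq_zero_of_odd hG) ?_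
  rwa [cobGate_matA_zero]

/-- arity-3 gate part of Theorem 4.6. -/
theorem stmt6 (S : Finset (Fin 3 → Fin 2)) (hS : S.Nonempty)
    (hcl : ∀ b ∈ S, bcompl b ∈ S) :
    ∃ α ξ12 ξ13 ξ23 : ℂ,
      cobGate ![matA, matA, matA] (fun b => if b ∈ S then (1 : ℂ) else 0) =
        fun b => α * (ket ![0, 0, 0] b + ξ12 * ket ![1, 1, 0] b
          + ξ13 * ket ![1, 0, 1] b + ξ23 * ket ![0, 1, 1] b) := by
  exact stmt6_general _ (fun b => by simp only [bcompl_mem_iff hcl])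
    (by simpa using hS.ne_empty)
end
end
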